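/- arXiv:2103.09661 — 3 statements merged into one kernel-verified Lean document; each statement's English description precedes it below -/
import Mathlib

section
/- Let m be a real number with m ≥ 3. Then there do not exist real numbers x, y satisfying the three conditions −2x + m·y ≥ 0, m·x − 2y ≥ 0, and −2x² + 2m·x·y − 2y² = −2. (Equivalently, for a class 𝐫 = x·𝐬 + y·𝐭 in the real span of two spherical classes 𝐬, 𝐭 with 𝐬² = 𝐭² = −2 and (𝐬,𝐭) = m ≥ 3, the system (𝐬,𝐫) ≥ 0, (𝐭,𝐭) = −2, (𝐭,𝐫) ≥ 0, 𝐫² = −2 is contradictory.) -/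
/-!
Write `𝐫 = x𝐬 + y𝐭`, where `𝐬² = 𝐭² = -k` and `(𝐬, 𝐭) = m`. The identity
`(m + k) 𝐫² = 2 (𝐬, 𝐫) (𝐭, 𝐫) + k (m - k) (x + y)²`
shows that if `0 < k ≤ m` and `𝐫` pairs non-negatively with both `𝐬` and `𝐭`, then `𝐫² ≥ 0`.
Spherical classes are the case `k = 2`, so such an `𝐫` cannot be spherical once `m ≥ 2`.
-/

section RankTwo

variable {R : Type*} [CommRing R]

theorem rankTwo_add_mul_square_eq (k m x y : R) :
    (m + k) * (-k * x ^ 2 + 2 * m * x * y - k * y ^ 2) =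
      2 * ((-k * x + m * y) * (m * x - k * y)) + k * (m - k) * (x + y) ^ 2 := by
  ring

variable [LinearOrder R] [IsStrictOrderedRing R]

theorem rankTwo_square_nonneg_of_pairings_nonneg {k m x y : R} (hk : 0 < k) (hkm : k ≤ m)
    (hs : 0 ≤ -k * x + m * y) (ht : 0 ≤ m * x - k * y) :
    0 ≤ -k * x ^ 2 + 2 * m * x * y - k * y ^ 2 := by
  have hmk : 0 < m + k := add_pos (hk.trans_le hkm) hk
  have hpairings : 0 ≤ 2 * ((-k * x + m * y) * (m * x - k * y)) :=
    mul_nonneg zero_le_two (mul_nonneg hs ht)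
  have hsum : 0 ≤ k * (m - k) * (x + y) ^ 2 :=
    mul_nonneg (mul_nonneg hk.le (sub_nonneg.mpr hkm)) (sq_nonneg _)
  have hprod : 0 ≤ (m + k) * (-k * x ^ 2 + 2 * m * x * y - k * y ^ 2) := by
    rw [rankTwo_add_mul_square_eq]
    exact add_nonneg hpairings hsum
  exact nonneg_of_mul_nonneg_right hprod hmk

theorem no_third_spherical_class_general (m : R) (hm : 2 ≤ m) :
    ¬ ∃ x y : R, -2 * x + m * y ≥ 0 ∧ m * x - 2 * y ≥ 0 ∧
      -2 * x ^ 2 + 2 * m * x * y - 2 * y ^ 2 = -2 := by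
  rintro ⟨x, y, hs, ht, hspherical⟩
  have hnonneg := rankTwo_square_nonneg_of_pairings_nonneg two_pos hm hs ht
  linarith

end RankTwo

/-- For `m ≥ 3`, the system `−2x + m y ≥ 0`, `m x − 2y ≥ 0`,
`−2x² + 2 m x y − 2y² = −2` has no real solutions. -/
theorem no_third_spherical_class (m : ℝ) (hm : 3 ≤ m) :
    ¬ ∃ x y : ℝ, -2 * x + m * y ≥ 0 ∧ m * x - 2 * y ≥ 0 ∧
      -2 * x ^ 2 + 2 * m * x * y - 2 * y ^ 2 = -2 :=
  no_third_spherical_class_general m (by linarith)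
end

section
/- Let r, m, d, t be integers with r > 0, m > 0, d > 0 and gcd(r, gcd(m, t)) = 1. Then there exists an integer k such that gcd(m, gcd(m·d + k·r, t + m·k)) = 1. -/
/-! Modulo `m` the twisted entries `m * d + k * r` and `t + m * k` are `k * r` and `t`, so the
divisibility of the twisted class is `gcd (k * r) (gcd m t)`. For `k = 1` this is the gcd of the
original Mukai vector, so the explicit twist by `O(f)` works and Dirichlet's theorem on primes in
arithmetic progressions can be avoided. -/

section GCD

variable {R : Type*} [CommRing R] [NormalizedGCDMonoid R]

theorem gcd_gcd_mul_add_mul_add_mul (r m d t k : R) :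
    gcd m (gcd (m * d + k * r) (t + m * k)) = gcd (k * r) (gcd m t) := by
  have chern_dvd_sub : m ∣ (m * d + k * r) - k * r := ⟨d, by ring⟩
  have last_dvd_sub : m ∣ (t + m * k) - t := ⟨k, by ring⟩
  calc
    gcd m (gcd (m * d + k * r) (t + m * k))
        = gcd (gcd m (m * d + k * r)) (t + m * k) := (gcd_assoc _ _ _).symm
    _ = gcd (gcd m (k * r)) (t + m * k) := by rw [gcd_eq_of_dvd_sub_right chern_dvd_sub]
    _ = gcd (k * r) (gcd m (t + m * k)) := by rw [gcd_comm m (k * r), gcd_assoc]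
    _ = gcd (k * r) (gcd m t) := by rw [gcd_eq_of_dvd_sub_right last_dvd_sub]

theorem exists_coprime_twist_general (r m d t : R) (hprim : gcd r (gcd m t) = 1) :
    ∃ k : R, gcd m (gcd (m * d + k * r) (t + m * k)) = 1 :=
  ⟨1, by rw [gcd_gcd_mul_add_mul_add_mul, one_mul, hprim]⟩

end GCD

/-- A twist by `O(kf)` can always be chosen making the first Chern class and
the last component coprime: if `r > 0`, `m > 0`, `d > 0` and
`gcd(r, gcd(m, t)) = 1`, then there is an integer `k` with
`gcd(m, gcd(m·d + k·r, t + m·k)) = 1`. -/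
theorem exists_coprime_twist (r m d t : ℤ) (hr : 0 < r) (hm : 0 < m) (hd : 0 < d)
    (hprim : Int.gcd r (Int.gcd m t : ℤ) = 1) :
    ∃ k : ℤ, Int.gcd m (Int.gcd (m * d + k * r) (t + m * k) : ℤ) = 1 := by
  simp only [← Nat.cast_inj (R := ℤ), Int.coe_gcd, Nat.cast_one] at hprim ⊢
  exact exists_coprime_twist_general r m d t hprim
end

section
/- Let m be an integer with m ≥ 2. Define u : ℕ → ℤ by u₀ = 0, u₁ = 1, and u_{k+2} = m·u_{k+1} − u_k. Then for all integers x ≥ 0 and y ≥ 0, we have x² − m·x·y + y² = 1 if and only if there exists k ∈ ℕ with (x, y) = (u_k, u_{k+1}) or (x, y) = (u_{k+1}, u_k). -/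
/-!
The form `x² - m x y + y²` is invariant under the reflection `(x, y) ↦ (m x - y, x)`, and the
recurrence for `u` is the inverse of this reflection, so all pairs of consecutive terms of `u` lie
on the level set of `(u 0, u 1)`. Conversely, a solution with `0 < x ≤ y` satisfies
`(m x - y) y = x² - 1`, whence `0 ≤ m x - y < x`: reflecting gives a smaller solution (Vieta
jumping), and the descent can only stop at `(0, 1)`.
-/

theorem sq_sub_mul_add_sq_reflection {R : Type*} [CommRing R] (m x y : R) :
    (m * x - y) ^ 2 - m * (m * x - y) * x + x ^ 2 = x ^ 2 - m * x * y + y ^ 2 := by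
  ring

theorem sq_sub_mul_add_sq_of_recurrence {R : Type*} [CommRing R] {m : R} {u : ℕ → R}
    (hurec : ∀ k, u (k + 2) = m * u (k + 1) - u k) (k : ℕ) :
    u k ^ 2 - m * u k * u (k + 1) + u (k + 1) ^ 2 = u 0 ^ 2 - m * u 0 * u 1 + u 1 ^ 2 := by
  induction k with
  | zero => rfl
  | succ k ih =>
    have hback : m * u (k + 1) - u (k + 2) = u k := by rw [hurec, sub_sub_cancel]
    rw [← ih, ← sq_sub_mul_add_sq_reflection m (u (k + 1)), hback]

theorem mul_sub_mem_Ico_of_sq_sub_mul_add_sq_eq {R : Type*} [CommRing R] [LinearOrder R]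
    [IsStrictOrderedRing R] {m x y c : R} (hx : 0 < x) (hxy : x ≤ y) (hc : 0 < c)
    (hcx : c ≤ x ^ 2) (h : x ^ 2 - m * x * y + y ^ 2 = c) : m * x - y ∈ Set.Ico 0 x := by
  have hy : 0 < y := hx.trans_le hxy
  have hvieta : (m * x - y) * y = x ^ 2 - c := by linear_combination -h
  constructor
  · refine nonneg_of_mul_nonneg_left ?_ hy
    rw [hvieta]
    exact sub_nonneg.2 hcx
  · refine lt_of_mul_lt_mul_right ?_ hy.le
    calc
      (m * x - y) * y = x ^ 2 - c := hvieta
      _ < x * x := by rw [sq]; exact sub_lt_self _ hc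
      _ ≤ x * y := mul_le_mul_of_nonneg_left hxy hx.le

theorem exists_eq_recurrence_of_le {m : ℤ} {u : ℕ → ℤ} (hu0 : u 0 = 0) (hu1 : u 1 = 1)
    (hurec : ∀ k, u (k + 2) = m * u (k + 1) - u k) {x y : ℤ} (hx : 0 ≤ x) (hxy : x ≤ y)
    (h : x ^ 2 - m * x * y + y ^ 2 = 1) : ∃ k, x = u k ∧ y = u (k + 1) := by
  rcases hx.eq_or_lt with rfl | hx
  · have hy : y ^ 2 = 1 := by simpa using h
    exact ⟨0, hu0.symm, ((pow_eq_one_iff_of_nonneg hxy two_ne_zero).1 hy).trans hu1.symm⟩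
  · obtain ⟨hz, hzx⟩ :=
      mul_sub_mem_Ico_of_sq_sub_mul_add_sq_eq hx hxy one_pos (one_le_pow₀ hx) h
    obtain ⟨k, hk, hk'⟩ := exists_eq_recurrence_of_le hu0 hu1 hurec hz hzx.le
      ((sq_sub_mul_add_sq_reflection m x y).trans h)
    exact ⟨k + 1, hk', by rw [hurec, ← hk', ← hk, sub_sub_cancel]⟩
termination_by x.toNat

theorem spherical_classes_parametrization_general (m : ℤ)
    (u : ℕ → ℤ) (hu0 : u 0 = 0) (hu1 : u 1 = 1)
    (hurec : ∀ k : ℕ, u (k + 2) = m * u (k + 1) - u k) :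
    ∀ x y : ℤ, 0 ≤ x → 0 ≤ y →
      (x ^ 2 - m * x * y + y ^ 2 = 1 ↔
        ∃ k : ℕ, (x = u k ∧ y = u (k + 1)) ∨ (x = u (k + 1) ∧ y = u k)) := by
  intro x y hx hy
  have hswap (a b : ℤ) : a ^ 2 - m * a * b + b ^ 2 = b ^ 2 - m * b * a + a ^ 2 := by ring
  have hu (k : ℕ) : u k ^ 2 - m * u k * u (k + 1) + u (k + 1) ^ 2 = 1 := by
    simpa [hu0, hu1] using sq_sub_mul_add_sq_of_recurrence hurec k
  constructor
  · intro h
    rcases le_total x y with hxy | hyx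
    · obtain ⟨k, hk⟩ := exists_eq_recurrence_of_le hu0 hu1 hurec hx hxy h
      exact ⟨k, .inl hk⟩
    · obtain ⟨k, hk⟩ := exists_eq_recurrence_of_le hu0 hu1 hurec hy hyx ((hswap y x).trans h)
      exact ⟨k, .inr hk.symm⟩
  · rintro ⟨k, ⟨rfl, rfl⟩ | ⟨rfl, rfl⟩⟩
    · exact hu k
    · exact (hswap _ _).trans (hu k)

/-- Parametrization of the nonnegative solutions of `x² − m x y + y² = 1` for an
integer `m ≥ 2`, by the recursive sequence `u₀ = 0`, `u₁ = 1`,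
`u_{k+2} = m u_{k+1} − u_k`. -/
theorem spherical_classes_parametrization (m : ℤ) (hm : 2 ≤ m)
    (u : ℕ → ℤ) (hu0 : u 0 = 0) (hu1 : u 1 = 1)
    (hurec : ∀ k : ℕ, u (k + 2) = m * u (k + 1) - u k) :
    ∀ x y : ℤ, 0 ≤ x → 0 ≤ y →
      (x ^ 2 - m * x * y + y ^ 2 = 1 ↔
        ∃ k : ℕ, (x = u k ∧ y = u (k + 1)) ∨ (x = u (k + 1) ∧ y = u k)) :=
  spherical_classes_parametrization_general m u hu0 hu1 hurec
end
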